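/- arXiv:2303.14807 — 2 statements merged into one kernel-verified Lean document; each statement's English description precedes it below -/
import Mathlib

section
/- Let d ≥ 1 and let p ∈ ℂ[z_1,…,z_d] be a polynomial and q = ∏_{i=1}^N ω_i a finite product of affine-linear forms ω_i = a_i^0 + a_i^1 z_1 + ⋯ + a_i^d z_d, each not identically zero. Suppose there exists an index l ∈ {1,…,d} such that: (1) deg_{z_l}(p) + 1 < deg_{z_l}(q), where deg_{z_l} denotes the degree in the single variable z_l; and (2) every factor ω_i with a_i^l ≠ 0 satisfies a_i^m = 0 for all m > l (i.e., no linear factor of q involving z_l involves any variable of higher index). Then the iterated residue at infinity of p(z)dz/q(z) vanishes: there exists C ≥ 1 such that for every C-admissible radius tuple (R_1,…,R_d), the iterated contour integral of p/q over (R_1,…,R_d) equals 0. -/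
/-!
By compactness and continuity of the integrand on the torus, the iterated contour integral is, up to
the factor `(2πi)⁻ᵈ`, Mathlib's `torusIntegral`, in which the order of integration is free.
So it suffices that the integral in the single variable `z_l` vanishes when the other variables
are frozen on their circles (`torusIntegral_eq_zero`).

For admissible radii the highest-index term of each form `ω_i` dominates all the others, so
`ω_i` has no zero on the torus (`affine_ne_zero`). By the second hypothesis the forms involving
`z_l` have `z_l` as their highest variable, so they stay nonzero when `|z_l|` is enlarged: all poles
in `z_l` lie inside `|z_l| < R_l` (`affine_ne_zero_outside`). By the degree hypothesis
`z_l · p/q → 0` as `z_l → ∞`, so pushing the contour to infinity shows that the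
`z_l`-integral is zero (`circleIntegral_eq_zero_of_decay`).
-/

open scoped BigOperators

/-- The iterated contour integral `(1/(2πi))^d ∮_{|z_1|=R_1} ⋯ ∮_{|z_d|=R_d} f dz_d ⋯ dz_1`,
where the outermost integral is in the first variable and each circle (centered at the
origin) is traversed counterclockwise. -/
noncomputable def iteratedCircleIntegral :
    (d : ℕ) → ((Fin d → ℂ) → ℂ) → (Fin d → ℝ) → ℂ
  | 0, f, _ => f Fin.elim0
  | d + 1, f, R =>
      (2 * Real.pi * Complex.I)⁻¹ *
        (∮ z in C(0, R 0),
          iteratedCircleIntegral d (fun w => f (Fin.cons z w)) (fun i => R i.succ))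

/-- `R = (R_1, …, R_d)` is a `C`-admissible radius tuple: all radii are positive,
`C < R_1`, and `C · R_j < R_{j+1}` for `1 ≤ j ≤ d − 1`. -/
def CAdmissible (d : ℕ) (C : ℝ) (R : Fin d → ℝ) : Prop :=
  (∀ i, 0 < R i) ∧ (∀ i : Fin d, (i : ℕ) = 0 → C < R i) ∧
    ∀ i j : Fin d, (j : ℕ) = (i : ℕ) + 1 → C * R i < R j

open Bornology Filter Topology in
/-- A function holomorphic outside a disc and `o(1/w)` at infinity has zero contour integral, by
pushing the contour to infinity. -/
lemma circleIntegral_eq_zero_of_decay {g : ℂ → ℂ} {R : ℝ} (hR : 0 < R)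
    (hg : ∀ w, R ≤ ‖w‖ → DifferentiableAt ℂ g w)
    (hlim : Tendsto (fun w => w * g w) (cobounded ℂ) (𝓝 0)) :
    (∮ w in C(0, R), g w) = 0 := by
  rw [← norm_le_zero_iff]
  refine le_of_forall_pos_le_add fun ε hε => ?_
  have hε' : 0 < ε / (2 * Real.pi) := by positivity
  have h1 := hlim.norm.eventually_lt_const (u := ε / (2 * Real.pi)) (by simpa using hε')
  rw [← comap_norm_atTop, eventually_comap] at h1
  obtain ⟨R', h2, hR'⟩ := (h1.and (eventually_ge_atTop R)).exists
  have hpos : 0 < R' := hR.trans_le hR'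
  have hsub : ∀ w ∈ Metric.closedBall (0 : ℂ) R' \ Metric.ball 0 R, R ≤ ‖w‖ := by
    intro w hw
    simpa using hw.2
  rw [← Complex.circleIntegral_eq_of_differentiable_on_annulus_off_countable hR hR'
    (s := ∅) Set.countable_empty
    (fun w hw => (hg w (hsub w hw)).continuousAt.continuousWithinAt)
    (fun w hw => hg w (hsub w ⟨Metric.ball_subset_closedBall hw.1.1,
      fun h => hw.1.2 (Metric.ball_subset_closedBall h)⟩))]
  refine (circleIntegral.norm_integral_le_of_norm_le_const (C := ε / (2 * Real.pi) / R') hpos.le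
    fun w hw => ?_).trans (le_of_eq ?_)
  · have hw' : ‖w‖ = R' := by simpa using hw
    have := h2 w hw'
    rw [norm_mul, hw'] at this
    rw [le_div_iff₀ hpos, mul_comm]
    exact this.le
  · field_simp
    ring

open Bornology Filter Topology in
lemma tendsto_affine_inv (b a : ℂ) :
    Tendsto (fun w : ℂ => (if a = 0 then 1 else w) / (b + a * w)) (cobounded ℂ)
      (𝓝 (if a = 0 then b⁻¹ else a⁻¹)) := by
  by_cases ha : a = 0
  · simp [ha]
  · simp only [ha, if_false]
    have h : Tendsto (fun w : ℂ => (b * w⁻¹ + a)⁻¹) (cobounded ℂ) (𝓝 (b * 0 + a)⁻¹) :=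
      ((tendsto_inv₀_cobounded.const_mul b).add_const a).inv₀ (by simpa using ha)
    rw [mul_zero, zero_add] at h
    refine h.congr' ?_
    filter_upwards [eventually_ne_cobounded (0 : ℂ)] with w hw
    rw [div_eq_mul_inv, ← inv_inv w, ← mul_inv, inv_inv w]
    congr 1
    field_simp

open Bornology Filter Topology in
lemma tendsto_monomial_div_prod {N : ℕ} (b a : Fin N → ℂ) (k : ℕ)
    (hk : k + 1 < (Finset.univ.filter fun i => a i ≠ 0).card) :
    Tendsto (fun w : ℂ => w * (w ^ k / ∏ i, (b i + a i * w))) (cobounded ℂ) (𝓝 0) := by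
  set n := (Finset.univ.filter fun i => a i ≠ 0).card with hn
  have h1 := tendsto_finsetProd Finset.univ fun i _ => tendsto_affine_inv (b i) (a i)
  have h2 : Tendsto (fun w : ℂ => (w⁻¹) ^ (n - (k + 1))) (cobounded ℂ) (𝓝 0) := by
    have := (tendsto_inv₀_cobounded (α := ℂ)).pow (n - (k + 1))
    rwa [zero_pow (by omega)] at this
  have h3 := h2.mul h1
  rw [zero_mul] at h3
  refine h3.congr' ?_
  filter_upwards [eventually_ne_cobounded (0 : ℂ)] with w hw
  rw [Finset.prod_div_distrib, Finset.prod_ite, Finset.prod_const_one, Finset.prod_const, one_mul,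
    ← hn, ← mul_div_assoc, ← mul_div_assoc, ← pow_succ']
  congr 1
  rw [inv_pow, inv_mul_eq_iff_eq_mul₀ (pow_ne_zero _ hw), ← pow_add]
  congr 1
  omega

lemma torusMap_norm {d : ℕ} {R : Fin d → ℝ} (hR : ∀ i, 0 < R i) (θ : Fin d → ℝ) (i : Fin d) :
    ‖torusMap 0 R θ i‖ = R i := by
  simp [torusMap, Complex.norm_exp_ofReal_mul_I, abs_of_pos (hR i)]

lemma torusIntegrable_of_continuousOn {d : ℕ} {R : Fin d → ℝ} (hR : ∀ i, 0 < R i)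
    {f : (Fin d → ℂ) → ℂ} (hf : ContinuousOn f {z | ∀ i, ‖z i‖ = R i}) :
    TorusIntegrable f 0 R := by
  refine ContinuousOn.integrableOn_compact isCompact_Icc ?_
  refine hf.comp (Continuous.continuousOn ?_) fun θ _ i => torusMap_norm hR θ i
  unfold torusMap
  fun_prop

lemma continuousOn_insertNth_torus {d : ℕ} {R : Fin (d + 1) → ℝ} {f : (Fin (d + 1) → ℂ) → ℂ}
    (hf : ContinuousOn f {z | ∀ i, ‖z i‖ = R i}) (i : Fin (d + 1)) {x : ℂ} (hx : ‖x‖ = R i) :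
    ContinuousOn (fun y : Fin d → ℂ => f (i.insertNth x y))
      {y | ∀ j, ‖y j‖ = R (i.succAbove j)} := by
  refine hf.comp (Continuous.continuousOn ?_) fun y hy => ?_
  · exact Continuous.finInsertNth i continuous_const continuous_id
  · rw [Set.mem_ofPred_eq, i.forall_iff_succAbove]
    simpa using ⟨hx, hy⟩

lemma iteratedCircleIntegral_eq_torusIntegral : ∀ {d : ℕ} {R : Fin d → ℝ}, (∀ i, 0 < R i) →
    ∀ {f : (Fin d → ℂ) → ℂ}, ContinuousOn f {z | ∀ i, ‖z i‖ = R i} →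
    iteratedCircleIntegral d f R =
      ((2 * Real.pi * Complex.I)⁻¹) ^ d * torusIntegral f 0 R
  | 0, R, _, f, _ => by
    simp only [iteratedCircleIntegral, pow_zero, one_mul, torusIntegral_dim0]
    exact congrArg f (Subsingleton.elim _ _)
  | d + 1, R, hR, f, hf => by
    rw [iteratedCircleIntegral, torusIntegral_succ (torusIntegrable_of_continuousOn hR hf),
      pow_succ', mul_assoc _ (_ ^ d), ← circleIntegral.integral_const_mul (_ ^ d)]
    refine congrArg _ (circleIntegral.integral_congr (hR 0).le fun x hx => ?_)
    have hx' : ‖x‖ = R 0 := by simpa using hx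
    have hc := continuousOn_insertNth_torus hf 0 hx'
    simp only [Fin.insertNth_zero', Fin.zero_succAbove] at hc
    exact iteratedCircleIntegral_eq_torusIntegral (fun i => hR i.succ) hc

/-- If integrating out one variable always gives zero, then so does the whole torus integral: the
other variables can be peeled off first. -/
lemma torusIntegral_eq_zero : ∀ {d : ℕ} {R : Fin d → ℝ}, (∀ i, 0 < R i) →
    ∀ {f : (Fin d → ℂ) → ℂ}, ContinuousOn f {z | ∀ i, ‖z i‖ = R i} → ∀ l : Fin d,
    (∀ z : Fin d → ℂ, (∀ i, ‖z i‖ = R i) →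
      (∮ w in C(0, R l), f (Function.update z l w)) = 0) →
    torusIntegral f 0 R = 0
  | 0, _, _, _, _, l, _ => l.elim0
  | 1, R, hR, f, hf, l, h => by
    rw [torusIntegral_dim1]
    obtain rfl : l = 0 := Subsingleton.elim _ _
    rw [← h (fun i => (R i : ℂ)) fun i => by simp [abs_of_pos (hR i)]]
    congr 1
    ext w
    congr 1
    ext i
    obtain rfl : i = 0 := Subsingleton.elim _ _
    simp
  | d + 2, R, hR, f, hf, l, h => by
    obtain ⟨i, hi⟩ := exists_ne l
    obtain ⟨l', rfl⟩ := Fin.exists_succAbove_eq hi.symm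
    rw [torusIntegral_succAbove (torusIntegrable_of_continuousOn hR hf) i]
    rw [circleIntegral.integral_congr (g := fun _ => 0) (hR i).le fun x hx => ?_]
    · simp [circleIntegral]
    have hx' : ‖x‖ = R i := by simpa using hx
    refine torusIntegral_eq_zero (fun j => hR _) (continuousOn_insertNth_torus hf i hx') l'
      fun y hy => ?_
    simp only [Fin.insertNth_update]
    refine h _ ?_
    rw [i.forall_iff_succAbove]
    simpa using ⟨hx', hy⟩

/-- An affine form does not vanish where one of its terms dominates. -/
lemma affine_ne_zero {d : ℕ} {a0 : ℂ} {a z : Fin d → ℂ} {C : ℝ} {m : Fin d} (hC : 1 ≤ C)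
    (hsum : ‖a0‖ + ∑ j, ‖a j‖ < C * ‖a m‖) (hm : C ≤ ‖z m‖)
    (hz : ∀ j, j ≠ m → a j ≠ 0 → C * ‖z j‖ ≤ ‖z m‖) :
    a0 + ∑ j, a j * z j ≠ 0 := by
  intro h0
  rw [← Finset.add_sum_erase _ _ (Finset.mem_univ m)] at h0
  have h1 : a m * z m = -(a0 + ∑ j ∈ Finset.univ.erase m, a j * z j) := by
    linear_combination h0
  have h2 : ‖a m‖ * ‖z m‖ ≤ ‖a0‖ + ∑ j ∈ Finset.univ.erase m, ‖a j‖ * ‖z j‖ := by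
    rw [← norm_mul, h1, norm_neg]
    refine (norm_add_le _ _).trans ?_
    gcongr
    refine (norm_sum_le _ _).trans (le_of_eq ?_)
    simp
  have h3 : C * ∑ j ∈ Finset.univ.erase m, ‖a j‖ * ‖z j‖ ≤ (∑ j, ‖a j‖) * ‖z m‖ := by
    rw [Finset.mul_sum, Finset.sum_mul]
    refine (Finset.sum_le_sum fun j hj => ?_).trans (Finset.sum_le_sum_of_subset_of_nonneg
      (Finset.erase_subset m _) fun j _ _ => by positivity)
    by_cases ha : a j = 0
    · simp [ha]
    · have := mul_le_mul_of_nonneg_left (hz j (Finset.ne_of_mem_erase hj) ha) (norm_nonneg (a j))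
      linarith
  have h4 : C * ‖a0‖ ≤ ‖a0‖ * ‖z m‖ := by
    rw [mul_comm]
    gcongr
  have h5 := mul_lt_mul_of_pos_right hsum (show 0 < ‖z m‖ by linarith)
  have h6 := mul_le_mul_of_nonneg_left h2 (show 0 ≤ C by linarith)
  nlinarith

lemma CAdmissible.lt {d : ℕ} {C : ℝ} {R : Fin d → ℝ} (hC : 1 ≤ C) (h : CAdmissible d C R) :
    ∀ (n : ℕ) (hn : n < d), C < R ⟨n, hn⟩ ∧ ∀ j : Fin d, (j : ℕ) < n → C * R j < R ⟨n, hn⟩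
  | 0, hn => ⟨h.2.1 _ rfl, fun j hj => absurd hj (by omega)⟩
  | n + 1, hn => by
    have ih := CAdmissible.lt hC h n (by omega)
    have h1 := h.2.2 ⟨n, by omega⟩ ⟨n + 1, hn⟩ rfl
    have h2 := h.1 ⟨n, by omega⟩
    have h3 : R ⟨n, by omega⟩ ≤ C * R ⟨n, by omega⟩ := le_mul_of_one_le_left h2.le hC
    refine ⟨by linarith [ih.1], fun j hj => ?_⟩
    rcases Nat.lt_succ_iff_lt_or_eq.mp hj with hj | hj
    · linarith [ih.2 j hj]
    · have hj' : j = ⟨n, by omega⟩ := Fin.ext hj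
      rw [hj']
      exact h1

/-- Under the triangularity hypothesis `hvars`, and for admissible radii with `C` large compared to
the coefficients (`hsum`), an affine form has no zero on the torus, even when `z_l` is allowed to
move outside its circle. -/
lemma affine_ne_zero_outside {d : ℕ} {a0 : ℂ} {a z : Fin d → ℂ} {C : ℝ} {R : Fin d → ℝ}
    (hC : 1 ≤ C) (hR : CAdmissible d C R) (l : Fin d)
    (hω : a0 ≠ 0 ∨ ∃ j, a j ≠ 0)
    (hsum : ∀ m, a m ≠ 0 → ‖a0‖ + ∑ j, ‖a j‖ < C * ‖a m‖)
    (hvars : a l ≠ 0 → ∀ m : Fin d, l < m → a m = 0)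
    (hz : ∀ j, j ≠ l → ‖z j‖ = R j) (hzl : R l ≤ ‖z l‖) :
    a0 + ∑ j, a j * z j ≠ 0 := by
  by_cases hne : ∃ j, a j ≠ 0
  · obtain ⟨j₀, hj₀⟩ := hne
    obtain ⟨m, hm, hmax⟩ := Finset.exists_max_image (Finset.univ.filter fun j => a j ≠ 0) id
      ⟨j₀, by simpa using hj₀⟩
    simp only [Finset.mem_filter, Finset.mem_univ, true_and, id] at hm hmax
    have hRm : R m ≤ ‖z m‖ := by
      by_cases hml : m = l
      · exact hml ▸ hzl
      · exact (hz m hml).ge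
    obtain ⟨h1, h2⟩ := CAdmissible.lt hC hR m m.2
    refine affine_ne_zero hC (hsum m hm) (h1.le.trans hRm) fun j hjm haj => ?_
    have hlt : j < m := lt_of_le_of_ne (hmax j haj) hjm
    have hjl : j ≠ l := by
      rintro rfl
      exact hm (hvars haj m hlt)
    rw [hz j hjl]
    exact (h2 j hlt).le.trans hRm
  · have h0 : ∀ j, a j = 0 := by simpa using hne
    have ha0 : a0 ≠ 0 := hω.resolve_right hne
    simpa [h0] using ha0

lemma degreeOf_prod_affine_le {d N : ℕ} (a0 : Fin N → ℂ) (a : Fin N → Fin d → ℂ) (l : Fin d) :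
    MvPolynomial.degreeOf l
        (∏ i : Fin N, (MvPolynomial.C (a0 i) +
          ∑ j : Fin d, MvPolynomial.C (a i j) * MvPolynomial.X j)) ≤
      (Finset.univ.filter fun i => a i l ≠ 0).card := by
  refine (MvPolynomial.degreeOf_prod_le _ _ _).trans ?_
  rw [Finset.card_filter]
  refine Finset.sum_le_sum fun i _ => ?_
  refine (MvPolynomial.degreeOf_add_le _ _ _).trans (max_le ?_ ?_)
  · simp [MvPolynomial.degreeOf_C]
  refine (MvPolynomial.degreeOf_sum_le _ _ _).trans (Finset.sup_le fun j _ => ?_)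
  by_cases h0 : a i j = 0
  · simp [h0]
  refine (MvPolynomial.degreeOf_C_mul_le _ _ _).trans ?_
  rw [MvPolynomial.degreeOf_X]
  by_cases hj : l = j
  · subst hj
    simp [h0]
  · simp [hj]

/-- **Residue vanishing criterion.** Let `q = ∏_{i=1}^N ω_i` be a product of
not-identically-zero affine-linear forms. Suppose for some variable index `l`:
(1) `deg_{z_l} p + 1 < deg_{z_l} q`, and (2) every factor `ω_i` involving `z_l`
involves no variable of index larger than `l`. Then the iterated residue at infinity
of `p dz / q` vanishes: all iterated contour integrals of `p/q` over `C`-admissible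
radius tuples (for suitable `C ≥ 1`) are `0`. -/
theorem iteratedResidue_vanishing
    (d N : ℕ) (hd : 1 ≤ d)
    (p : MvPolynomial (Fin d) ℂ)
    (a0 : Fin N → ℂ) (a : Fin N → Fin d → ℂ)
    (hω : ∀ i : Fin N, a0 i ≠ 0 ∨ ∃ j, a i j ≠ 0)
    (l : Fin d)
    (hdeg : MvPolynomial.degreeOf l p + 1 <
      MvPolynomial.degreeOf l
        (∏ i : Fin N, (MvPolynomial.C (a0 i) +
          ∑ j : Fin d, MvPolynomial.C (a i j) * MvPolynomial.X j)))
    (hvars : ∀ i : Fin N, a i l ≠ 0 → ∀ m : Fin d, l < m → a i m = 0) :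
    ∃ C : ℝ, 1 ≤ C ∧
      ∀ R : Fin d → ℝ, CAdmissible d C R →
        iteratedCircleIntegral d
          (fun z => MvPolynomial.eval z p /
            ∏ i : Fin N, (a0 i + ∑ j : Fin d, a i j * z j)) R = 0 := by
  -- `c i m` bounds the ratio of the total size of `ω_i` to its `m`-th coefficient.
  set c : Fin N → Fin d → ℝ := fun i m => (‖a0 i‖ + ∑ j, ‖a i j‖) / ‖a i m‖ with hc
  have hc0 : ∀ i m, 0 ≤ c i m := fun i m => by positivity
  set C : ℝ := 1 + ∑ i, ∑ m, c i m with hCdef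
  have hC : 1 ≤ C := by
    have : 0 ≤ ∑ i, ∑ m, c i m := Finset.sum_nonneg fun i _ => Finset.sum_nonneg fun m _ => hc0 i m
    linarith
  have hsum : ∀ i m, a i m ≠ 0 → ‖a0 i‖ + ∑ j, ‖a i j‖ < C * ‖a i m‖ := by
    intro i m hm
    rw [← div_lt_iff₀ (norm_pos_iff.mpr hm)]
    have h1 := Finset.single_le_sum (fun m _ => hc0 i m) (Finset.mem_univ m)
    have h2 := Finset.single_le_sum (f := fun i => ∑ m, c i m)
      (fun i _ => Finset.sum_nonneg fun m _ => hc0 i m) (Finset.mem_univ i)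
    have h3 : c i m < C := by linarith
    exact h3
  refine ⟨C, hC, fun R hR => ?_⟩
  have hne : ∀ z : Fin d → ℂ, (∀ j, j ≠ l → ‖z j‖ = R j) → R l ≤ ‖z l‖ →
      ∏ i : Fin N, (a0 i + ∑ j : Fin d, a i j * z j) ≠ 0 := fun z hz hzl =>
    Finset.prod_ne_zero_iff.mpr fun i _ =>
      affine_ne_zero_outside hC hR l (hω i) (hsum i) (hvars i) hz hzl
  have hcont : ContinuousOn (fun z => MvPolynomial.eval z p /
      ∏ i : Fin N, (a0 i + ∑ j : Fin d, a i j * z j)) {z | ∀ i, ‖z i‖ = R i} :=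
    ContinuousOn.div (MvPolynomial.continuous_eval p).continuousOn
      (Continuous.continuousOn (by fun_prop)) fun z hz => hne z (fun j _ => hz j) (hz l).ge
  rw [iteratedCircleIntegral_eq_torusIntegral hR.1 hcont,
    torusIntegral_eq_zero hR.1 hcont l fun z hz => ?_, mul_zero]
  -- As functions of `w = z_l`, numerator and denominator split off the frozen variables.
  have hnum : ∀ w, MvPolynomial.eval (Function.update z l w) p =
      ∑ s ∈ p.support, (p.coeff s * ∏ j ∈ Finset.univ.erase l, z j ^ s j) * w ^ s l := by
    intro w
    rw [MvPolynomial.eval_eq']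
    refine Finset.sum_congr rfl fun s _ => ?_
    rw [← Finset.mul_prod_erase _ _ (Finset.mem_univ l), Function.update_self,
      Finset.prod_congr rfl fun j hj => by
        rw [Function.update_of_ne (Finset.ne_of_mem_erase hj)]]
    ring
  have hden : ∀ w, ∏ i : Fin N, (a0 i + ∑ j : Fin d, a i j * Function.update z l w j) =
      ∏ i : Fin N, ((a0 i + ∑ j ∈ Finset.univ.erase l, a i j * z j) + a i l * w) := by
    intro w
    refine Finset.prod_congr rfl fun i _ => ?_
    rw [← Finset.add_sum_erase _ _ (Finset.mem_univ l), Function.update_self,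
      Finset.sum_congr rfl fun j hj => by
        rw [Function.update_of_ne (Finset.ne_of_mem_erase hj)]]
    ring
  have hne' : ∀ w, R l ≤ ‖w‖ →
      ∏ i : Fin N, ((a0 i + ∑ j ∈ Finset.univ.erase l, a i j * z j) + a i l * w) ≠ 0 := by
    intro w hw
    rw [← hden]
    refine hne _ (fun j hj => ?_) (by simpa using hw)
    rw [Function.update_of_ne hj, hz]
  simp only [hnum, hden]
  refine circleIntegral_eq_zero_of_decay (hR.1 l) (fun w hw => ?_) ?_
  · exact DifferentiableAt.fun_div (by fun_prop) (by fun_prop) (hne' w hw)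
  · have key := tendsto_finsetSum p.support fun s hs =>
      (tendsto_monomial_div_prod (fun i => a0 i + ∑ j ∈ Finset.univ.erase l, a i j * z j)
        (fun i => a i l) (s l) (by
          have h1 := MvPolynomial.monomial_le_degreeOf l hs
          have h2 := degreeOf_prod_affine_le a0 a l
          omega)).const_mul (p.coeff s * ∏ j ∈ Finset.univ.erase l, z j ^ s j)
    simp only [mul_zero, Finset.sum_const_zero] at key
    refine key.congr fun w => ?_
    rw [Finset.sum_div, Finset.mul_sum]
    refine Finset.sum_congr rfl fun s _ => ?_
    ring
end

section
/- Let k ≥ 2 and let τ = (τ_1,…,τ_{k−1}) be an admissible tuple, i.e., each τ_i is a nonempty finite set of positive integers with τ_i ⊆ {1,…,i} and Σ_{t ∈ τ_i} t ≤ i, and the sets τ_1,…,τ_{k−1} are pairwise distinct. If τ ≠ ({1},{2},…,{k−1}), i.e., not every τ_i is the singleton {i}, then there exists an integer i with 2 ≤ i ≤ k−1 such that i does not belong to any of the sets τ_1,…,τ_{k−1}. -/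
/-!
If no index in `{2,…,n}` (with `n = k − 1`) were missing, then `τ_i = {i}` for all `i`, by downward
induction: `i` lies in some `τ_j`, and `j ≥ i` because `τ_j ⊆ {1,…,j}`; since `τ_j = {j}` for
`j > i`, necessarily `j = i`. Then `i ∈ τ_i` and `Σ τ_i ≤ i` leave no room for a further positive
element. For `i = 1` the inclusion `τ_1 ⊆ {1}` gives `1 ∈ τ_1` directly.
-/

open scoped BigOperators

theorem eq_singleton_of_mem_of_sum_le {s : Finset ℕ} {m : ℕ} (hpos : ∀ x ∈ s, 1 ≤ x)
    (hm : m ∈ s) (hs : ∑ t ∈ s, t ≤ m) : s = {m} := by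
  refine Finset.eq_singleton_iff_unique_mem.2 ⟨hm, fun x hx => ?_⟩
  by_contra hxm
  have hle : ∑ t ∈ ({x, m} : Finset ℕ), t ≤ ∑ t ∈ s, t :=
    Finset.sum_le_sum_of_subset (by
      intro y hy
      rcases Finset.mem_insert.1 hy with rfl | hy
      · exact hx
      · rw [Finset.mem_singleton.1 hy]; exact hm)
  rw [Finset.sum_pair hxm] at hle
  have := hpos x hx
  omega

/-- **Missing index in a non-distinguished admissible tuple.** Let `k ≥ 2` and let
`τ = (τ_1,…,τ_{k−1})` be an admissible tuple: the `τ_i` are pairwise distinct nonempty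
finite sets of positive integers with `τ_i ⊆ {1,…,i}` and `Σ_{t ∈ τ_i} t ≤ i`.
(The `i`-th set, for `1 ≤ i ≤ k−1`, is `τ ⟨i−1⟩`, so the conditions read
`τ i ⊆ {1,…,i+1}` and `Σ τ i ≤ i+1` for `i : Fin (k−1)`.)
If not every `τ_i` equals the singleton `{i}`, then some integer `i` with
`2 ≤ i ≤ k−1` belongs to none of the sets `τ_1,…,τ_{k−1}`. -/
theorem admissible_tuple_missing_index
    (k : ℕ) (hk : 2 ≤ k)
    (τ : Fin (k - 1) → Finset ℕ)
    (hne : ∀ i : Fin (k - 1), (τ i).Nonempty)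
    (hsub : ∀ i : Fin (k - 1), τ i ⊆ Finset.Icc 1 ((i : ℕ) + 1))
    (hsum : ∀ i : Fin (k - 1), ∑ t ∈ τ i, t ≤ (i : ℕ) + 1)
    (hinj : Function.Injective τ)
    (hnot : ¬ ∀ i : Fin (k - 1), τ i = {(i : ℕ) + 1}) :
    ∃ i : ℕ, 2 ≤ i ∧ i ≤ k - 1 ∧ ∀ j : Fin (k - 1), i ∉ τ j := by
  by_contra! hall
  apply hnot
  have key : ∀ d : ℕ, ∀ i : Fin (k - 1), k - 1 - (i : ℕ) = d → τ i = {(i : ℕ) + 1} := by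
    intro d
    induction d using Nat.strong_induction_on with
    | _ d ih =>
      intro i hi
      have hik := i.isLt
      refine eq_singleton_of_mem_of_sum_le
        (fun x hx => (Finset.mem_Icc.1 (hsub i hx)).1) ?_ (hsum i)
      by_cases h0 : (i : ℕ) = 0
      · obtain ⟨x, hx⟩ := hne i
        have hx' := Finset.mem_Icc.1 (hsub i hx)
        have : x = (i : ℕ) + 1 := by omega
        exact this ▸ hx
      · obtain ⟨j, hj⟩ := hall ((i : ℕ) + 1) (by omega) (by omega)
        have hj' := Finset.mem_Icc.1 (hsub j hj)
        have hjk := j.isLt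
        have hji : j = i := by
          by_contra hne'
          have hval : (j : ℕ) ≠ i := fun h => hne' (Fin.ext h)
          have hτj := ih (k - 1 - (j : ℕ)) (by omega) j rfl
          rw [hτj, Finset.mem_singleton] at hj
          omega
        exact hji ▸ hj
  exact fun i => key _ i rfl
end
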